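/- arXiv:1010.4750 — 2 statements merged into one kernel-verified Lean document; each statement's English description precedes it below -/
import Mathlib

section
/- Let r ≥ 2 and let ξ ∈ ℂ be a primitive r-th root of unity. Suppose y, z ∈ ℚ(ξ) with z ≠ 0. If y^s·z ∈ ℤ[ξ] for infinitely many positive integers s, then y ∈ ℤ[ξ]. -/
noncomputable section

open NumberField in
/-- In a number field, infinitely many integral `y ^ s * z` with `z ≠ 0` force `y` integral. -/
theorem aux_integral {K : Type*} [Field K] [NumberField K] (y z : K) (hz : z ≠ 0)
    (h : {s : ℕ | 0 < s ∧ IsIntegral ℤ (y ^ s * z)}.Infinite) : IsIntegral ℤ y := by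
  obtain ⟨p, q, hq, rfl⟩ := IsFractionRing.div_surjective (A := 𝓞 K) z
  have hq0 : (algebraMap (𝓞 K) K q) ≠ 0 := by
    intro h0
    simp [h0] at hz
  have hp0 : p ≠ 0 := by
    rintro rfl
    simp at hz
  have hpI : IsIntegral ℤ (algebraMap (𝓞 K) K p) := RingOfIntegers.isIntegral_coe p
  have hqI : IsIntegral ℤ (algebraMap (𝓞 K) K q) := RingOfIntegers.isIntegral_coe q
  have key : IsAlmostIntegral (𝓞 K) y := by
    refine ⟨p, mem_nonZeroDivisors_of_ne_zero hp0, fun n => ?_⟩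
    obtain ⟨s, ⟨hs0, hs⟩, hns⟩ := h.exists_gt n
    have h1 : IsIntegral ℤ (y ^ s * algebraMap (𝓞 K) K p) := by
      have := hs.mul hqI
      have e : y ^ s * (algebraMap (𝓞 K) K p / algebraMap (𝓞 K) K q) * algebraMap (𝓞 K) K q
          = y ^ s * algebraMap (𝓞 K) K p := by field_simp
      rwa [e] at this
    have h2 : IsIntegral ℤ (algebraMap (𝓞 K) K p * y ^ n) := by
      apply IsIntegral.of_pow hs0
      obtain ⟨d, rfl⟩ := Nat.exists_eq_add_of_lt hns
      have := (h1.pow n).mul (hpI.pow (d + 1))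
      have e : (algebraMap (𝓞 K) K p * y ^ n) ^ (n + d + 1)
          = (y ^ (n + d + 1) * algebraMap (𝓞 K) K p) ^ n * algebraMap (𝓞 K) K p ^ (d + 1) := by
        generalize algebraMap (𝓞 K) K p = a
        rw [mul_pow, mul_pow, ← pow_mul, ← pow_mul, mul_comm n (n + d + 1), add_assoc, pow_add a]
        ring
      rw [e]
      exact this
    obtain ⟨x, hx⟩ := (IsIntegralClosure.isIntegral_iff (A := 𝓞 K)).1 h2
    exact ⟨x, by rw [hx, Algebra.smul_def]⟩
  exact isIntegral_trans y key.isIntegral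

/-- Let `ξ` be a primitive `r`-th root of unity, `y, z ∈ ℚ(ξ)` with `z ≠ 0`.
If `y^s z ∈ ℤ[ξ]` for infinitely many positive integers `s`, then `y ∈ ℤ[ξ]`. -/
theorem stmt_10 (r : ℕ) (hr : 2 ≤ r) (ξ : ℂ) (hξ : IsPrimitiveRoot ξ r)
    (y z : ℂ) (hy : y ∈ Subfield.closure ({ξ} : Set ℂ))
    (hzmem : z ∈ Subfield.closure ({ξ} : Set ℂ)) (hz : z ≠ 0)
    (h : {s : ℕ | 0 < s ∧ y ^ s * z ∈ Subring.closure ({ξ} : Set ℂ)}.Infinite) :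
    y ∈ Subring.closure ({ξ} : Set ℂ) := by
  have : NeZero r := ⟨by omega⟩
  let K := IntermediateField.adjoin ℚ ({ξ} : Set ℂ)
  have hc : IsCyclotomicExtension {r} ℚ K := by
    change IsCyclotomicExtension {r} ℚ (IntermediateField.adjoin ℚ {ξ}).toSubalgebra
    have hI : IsIntegral ℚ ξ := (hξ.isIntegral (by omega)).tower_top
    rw [IntermediateField.adjoin_simple_toSubalgebra_of_isAlgebraic hI.isAlgebraic]
    exact hξ.adjoin_isCyclotomicExtension ℚ
  have : NumberField K := IsCyclotomicExtension.numberField {r} ℚ K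
  have hξK : ξ ∈ K := IntermediateField.mem_adjoin_simple_self ℚ ξ
  have hle : Subfield.closure ({ξ} : Set ℂ) ≤ K.toSubfield :=
    Subfield.closure_le.2 (by simpa using hξK)
  have hint : ∀ x ∈ Subring.closure ({ξ} : Set ℂ), IsIntegral ℤ x := by
    intro x hx
    have : Subring.closure ({ξ} : Set ℂ) ≤ (integralClosure ℤ ℂ).toSubring :=
      Subring.closure_le.2 (Set.singleton_subset_iff.2 (hξ.isIntegral (by omega)))
    exact this hx
  have hinj : Function.Injective (algebraMap K ℂ) := (algebraMap K ℂ).injective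
  have hY : IsIntegral ℤ (⟨y, hle hy⟩ : K) := by
    apply aux_integral _ (⟨z, hle hzmem⟩ : K)
    · intro h0
      exact hz (congrArg (algebraMap K ℂ) h0)
    · refine h.mono ?_
      rintro s ⟨hs0, hs⟩
      refine ⟨hs0, ?_⟩
      rw [← isIntegral_algebraMap_iff hinj]
      exact hint _ hs
  have hζ : IsPrimitiveRoot (⟨ξ, hξK⟩ : K) r := by
    apply IsPrimitiveRoot.of_map_of_injective (f := algebraMap K ℂ) _ hinj
    exact hξ
  obtain ⟨w, hw⟩ :=
    (IsCyclotomicExtension.Rat.isIntegralClosure_adjoin_singleton hζ).isIntegral_iff.1 hY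
  have hle2 : Algebra.adjoin ℤ {(⟨ξ, hξK⟩ : K)} ≤
      subalgebraOfSubring ((Subring.closure ({ξ} : Set ℂ)).comap (algebraMap K ℂ)) := by
    rw [Algebra.adjoin_le_iff]
    rintro _ rfl
    exact Subring.subset_closure rfl
  have h3 := hle2 w.2
  have h4 : (w : K) = ⟨y, hle hy⟩ := hw
  rw [h4] at h3
  exact h3
end
end

section
/- Let r ≥ 2, let ξ ∈ ℂ be a primitive r-th root of unity, and let b be an integer coprime to r. Then: G(b,0,ξ)² is associated in ℤ[ξ] to r if r is odd; G(b,0,ξ)² = 0 if r ≡ 2 (mod 4); G(b,0,ξ)² is associated in ℤ[ξ] to 2r if r ≡ 0 (mod 4). Furthermore, if r ≡ 2 (mod 4), then G(b,b,ξ)² is associated in ℤ[ξ] to 2r. -/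
noncomputable section

/-- The quadratic Gauss sum `G(b,d,η) = Σ_{n=0}^{s-1} η^{bn²+dn}` for a root of unity `η`
of order `s`. -/
def GaussSum (s : ℕ) (b d : ℤ) (η : ℂ) : ℂ :=
  ∑ n ∈ Finset.range s, η ^ (b * (n : ℤ) ^ 2 + d * (n : ℤ))

/-- `u` is a unit of the subring `S` of `ℂ`. -/
def IsUnitIn (S : Subring ℂ) (u : ℂ) : Prop := u ∈ S ∧ ∃ v ∈ S, u * v = 1

/-- `x` and `y` are associates in the subring `S` of `ℂ`: `x = u y` for a unit `u` of `S`. -/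
def AssociatedIn (S : Subring ℂ) (x y : ℂ) : Prop := ∃ u, IsUnitIn S u ∧ x = u * y

open Finset

lemma sum_range_zmod (s : ℕ) [NeZero s] (F : ZMod s → ℂ) :
    ∑ n ∈ Finset.range s, F (n : ZMod s) = ∑ x, F x := by
  refine Finset.sum_bij' (fun n _ => (n : ZMod s)) (fun x _ => x.val) ?_ ?_ ?_ ?_ ?_
  · simp
  · intro x _; simpa using ZMod.val_lt x
  · intro n hn; exact ZMod.val_cast_of_lt (by simpa using hn)
  · intro x _; simp
  · simp

lemma zmodChar_int (s : ℕ) [NeZero s] {η : ℂ} (h : η ^ s = 1) (k : ℤ) :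
    AddChar.zmodChar s h (k : ZMod s) = η ^ k := by
  have h0 : η ≠ 0 := by
    rintro rfl; rw [zero_pow (NeZero.ne s)] at h; exact zero_ne_one h
  rw [AddChar.zmodChar_apply, ← zpow_natCast, ZMod.val_intCast]
  conv_rhs => rw [← Int.emod_add_mul_ediv k s, zpow_add₀ h0, zpow_mul, zpow_natCast, h, one_zpow,
    mul_one]

/-- quadratic sum attached to an additive character -/
def qsum {s : ℕ} [NeZero s] (e : AddChar (ZMod s) ℂ) (b : ZMod s) : ℂ := ∑ x, e (b * x ^ 2)

lemma gauss_eq (s : ℕ) [NeZero s] {η : ℂ} (h : η ^ s = 1) (b : ℤ) :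
    GaussSum s b 0 η = qsum (AddChar.zmodChar s h) b := by
  rw [GaussSum, qsum, ← sum_range_zmod s]
  refine Finset.sum_congr rfl fun n _ => ?_
  rw [← zmodChar_int s h]; congr 1; push_cast; ring

lemma qsum_mul_neg {s : ℕ} [NeZero s] (e : AddChar (ZMod s) ℂ) (he : e.IsPrimitive)
    (b : ZMod s) (hb : IsUnit b) :
    qsum e b * qsum e (-b) = ∑ t, if 2 * t = 0 then (s : ℂ) * e (b * t ^ 2) else 0 := by
  have h1 : qsum e b * qsum e (-b) = ∑ y, ∑ t, e (b * t ^ 2) * e (y * (2 * b * t)) := by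
    rw [mul_comm, qsum, qsum, Finset.sum_mul_sum]
    refine Finset.sum_congr rfl fun y _ => ?_
    rw [← Equiv.sum_comp (Equiv.addLeft y)]
    refine Finset.sum_congr rfl fun t _ => ?_
    rw [← AddChar.map_add_eq_mul, ← AddChar.map_add_eq_mul]
    congr 1; simp; ring
  rw [h1, Finset.sum_comm]
  refine Finset.sum_congr rfl fun t _ => ?_
  rw [← Finset.mul_sum, AddChar.sum_mulShift _ he, ZMod.card]
  have : 2 * b * t = 0 ↔ 2 * t = 0 := by
    rw [mul_comm 2 b, mul_assoc, hb.mul_right_eq_zero]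
  simp only [this]
  split_ifs <;> simp [mul_comm]

lemma qsum_odd {s : ℕ} [NeZero s] (hs : Odd s) (e : AddChar (ZMod s) ℂ) (he : e.IsPrimitive)
    (b : ZMod s) (hb : IsUnit b) : qsum e b * qsum e (-b) = s := by
  have h2 : IsUnit (2 : ZMod s) := by
    have := (ZMod.isUnit_iff_coprime 2 s).2 (Nat.coprime_two_left.2 hs)
    simpa using this
  rw [qsum_mul_neg e he b hb]
  simp [h2.mul_right_eq_zero]

lemma qsum_four {s : ℕ} [NeZero s] (hs : s % 4 = 0) (e : AddChar (ZMod s) ℂ) (he : e.IsPrimitive)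
    (b : ZMod s) (hb : IsUnit b) : qsum e b * qsum e (-b) = 2 * s := by
  obtain ⟨m, rfl⟩ : ∃ m, s = 4 * m := ⟨s / 4, by omega⟩
  have hm : 0 < m := by have := NeZero.ne (4 * m); omega
  have key : ∀ t : ZMod (4 * m), 2 * t = 0 ↔ t = 0 ∨ t = ((2 * m : ℕ) : ZMod (4 * m)) := by
    intro t
    have hv := ZMod.val_lt t
    have : t = ((t.val : ℕ) : ZMod (4 * m)) := by simp
    generalize t.val = v at *
    subst this
    constructor
    · intro h
      have h : ((2 * v : ℕ) : ZMod (4 * m)) = 0 := by push_cast; exact h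
      rw [ZMod.natCast_eq_zero_iff] at h
      obtain ⟨c, hc⟩ := h
      have : c < 2 := by
        by_contra hcon
        have : 4 * m * 2 ≤ 4 * m * c := Nat.mul_le_mul_left _ (by omega)
        omega
      interval_cases c
      · left; have : v = 0 := by omega
        simp [this]
      · right; have : v = 2 * m := by omega
        rw [this]
    · rintro (h | h)
      · rw [h]; simp
      · rw [h]
        have : ((2 * (2 * m) : ℕ) : ZMod (4 * m)) = 0 := by
          rw [ZMod.natCast_eq_zero_iff]; exact ⟨1, by ring⟩
        exact_mod_cast this
  have hne : (0 : ZMod (4 * m)) ≠ ((2 * m : ℕ) : ZMod (4 * m)) := by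
    intro h
    have := (ZMod.natCast_eq_zero_iff _ _).1 h.symm
    have := Nat.le_of_dvd (by omega) this
    omega
  have hsq : ((2 * m : ℕ) : ZMod (4 * m)) ^ 2 = 0 := by
    rw [← Nat.cast_pow, ZMod.natCast_eq_zero_iff]; exact ⟨m, by ring⟩
  rw [qsum_mul_neg e he b hb, ← Finset.sum_filter]
  have : (Finset.univ.filter fun t : ZMod (4 * m) => 2 * t = 0)
      = {0, ((2 * m : ℕ) : ZMod (4 * m))} := by
    ext t; simp only [Finset.mem_filter, Finset.mem_univ, true_and, Finset.mem_insert,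
      Finset.mem_singleton, key]
  rw [this, Finset.sum_pair hne, hsq]
  simp; ring

lemma qsum_sq {s : ℕ} [NeZero s] (e : AddChar (ZMod s) ℂ) (b : ZMod s) :
    qsum e b ^ 2 = ∑ p : ZMod s × ZMod s, e (b * (p.1 ^ 2 + p.2 ^ 2)) := by
  rw [sq, qsum, Finset.sum_mul_sum, Fintype.sum_prod_type]
  simp only [← AddChar.map_add_eq_mul, mul_add]

lemma qsum_pow_four {s : ℕ} [NeZero s] (e : AddChar (ZMod s) ℂ) (b : ZMod s) :
    qsum e b ^ 4 = ∑ p : (ZMod s × ZMod s) × (ZMod s × ZMod s),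
      e (b * ((p.1.1 ^ 2 + p.1.2 ^ 2) + (p.2.1 ^ 2 + p.2.2 ^ 2))) := by
  have : qsum e b ^ 4 = qsum e b ^ 2 * qsum e b ^ 2 := by ring
  rw [this, qsum_sq, Finset.sum_mul_sum]
  conv_rhs => rw [Fintype.sum_prod_type]
  simp only [← AddChar.map_add_eq_mul, mul_add]

lemma qsum_two {s : ℕ} [NeZero s] (e : AddChar (ZMod s) ℂ) (b α β : ZMod s)
    (h : α ^ 2 + β ^ 2 = -1) : qsum e b ^ 2 = qsum e (-b) ^ 2 := by
  rw [qsum_sq, qsum_sq]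
  let E : ZMod s × ZMod s ≃ ZMod s × ZMod s :=
    { toFun := fun p => (α * p.1 + β * p.2, β * p.1 - α * p.2)
      invFun := fun p => (-(α * p.1 + β * p.2), -(β * p.1 - α * p.2))
      left_inv := by
        rintro ⟨x, y⟩; ext
        · simp only; linear_combination (-x) * h
        · simp only; linear_combination (-y) * h
      right_inv := by
        rintro ⟨x, y⟩; ext
        · simp only; linear_combination (-x) * h
        · simp only; linear_combination (-y) * h }
  rw [← Equiv.sum_comp E]
  refine Finset.sum_congr rfl fun p _ => ?_
  congr 1
  simp only [E, Equiv.coe_fn_mk]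
  linear_combination b * (p.1 ^ 2 + p.2 ^ 2) * h

lemma qsum_quat {s : ℕ} [NeZero s] (e : AddChar (ZMod s) ℂ) (b k l m n : ZMod s)
    (h : k ^ 2 + l ^ 2 + m ^ 2 + n ^ 2 = -1) : qsum e b ^ 4 = qsum e (-b) ^ 4 := by
  rw [qsum_pow_four, qsum_pow_four]
  let E : (ZMod s × ZMod s) × (ZMod s × ZMod s) ≃ (ZMod s × ZMod s) × (ZMod s × ZMod s) :=
    { toFun := fun p =>
        ((k * p.1.1 - l * p.1.2 - m * p.2.1 - n * p.2.2,
          k * p.1.2 + l * p.1.1 + m * p.2.2 - n * p.2.1),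
         (k * p.2.1 - l * p.2.2 + m * p.1.1 + n * p.1.2,
          k * p.2.2 + l * p.2.1 - m * p.1.2 + n * p.1.1))
      invFun := fun p =>
        ((-(k * p.1.1 + l * p.1.2 + m * p.2.1 + n * p.2.2),
          -(k * p.1.2 - l * p.1.1 - m * p.2.2 + n * p.2.1)),
         (-(k * p.2.1 + l * p.2.2 - m * p.1.1 - n * p.1.2),
          -(k * p.2.2 - l * p.2.1 + m * p.1.2 - n * p.1.1)))
      left_inv := by
        rintro ⟨⟨x, y⟩, ⟨z, w⟩⟩; ext
        · simp only; linear_combination (-x) * h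
        · simp only; linear_combination (-y) * h
        · simp only; linear_combination (-z) * h
        · simp only; linear_combination (-w) * h
      right_inv := by
        rintro ⟨⟨x, y⟩, ⟨z, w⟩⟩; ext
        · simp only; linear_combination (-x) * h
        · simp only; linear_combination (-y) * h
        · simp only; linear_combination (-z) * h
        · simp only; linear_combination (-w) * h }
  rw [← Equiv.sum_comp E]
  refine Finset.sum_congr rfl fun p _ => ?_
  congr 1
  simp only [E, Equiv.coe_fn_mk]
  linear_combination b * (p.1.1 ^ 2 + p.1.2 ^ 2 + p.2.1 ^ 2 + p.2.2 ^ 2) * h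

lemma exists_two_sq {s : ℕ} [NeZero s] (hs : Odd s) : ∃ α β : ZMod s, α ^ 2 + β ^ 2 = -1 := by
  have hco : Nat.Coprime s 4 := by
    have : Nat.Coprime s (2 ^ 2) := (Nat.coprime_two_right.2 hs).pow_right 2
    simpa using this
  have h1 : 1 ≤ s := NeZero.one_le
  obtain ⟨k, hk1, hk2⟩ := Nat.chineseRemainder hco (s - 1) 1
  have hks : ((k + 1 : ℕ) : ZMod s) = 0 := by
    rw [ZMod.natCast_eq_zero_iff, ← Nat.modEq_zero_iff_dvd]
    have := hk1.add_right 1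
    rw [Nat.sub_add_cancel h1] at this
    exact this.trans (by simp [Nat.ModEq])
  have hu : k.Coprime (s * 4) := by
    apply Nat.Coprime.mul_right
    · have hd : s ∣ k + 1 := (ZMod.natCast_eq_zero_iff _ _).1 hks
      exact Nat.Coprime.coprime_dvd_right hd (by simp)
    · rw [Nat.Coprime, hk2.gcd_eq]; simp
  have : NeZero (s * 4) := ⟨by have := NeZero.ne s; omega⟩
  obtain ⟨p, -, hp, hpk⟩ := Nat.forall_exists_prime_gt_and_modEq 0 (NeZero.ne (s * 4)) hu
  have h4 : p % 4 ≠ 3 := by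
    have h := (hpk.of_mul_left s).trans hk2
    unfold Nat.ModEq at h; omega
  have := Fact.mk hp
  obtain ⟨a, c, hac⟩ := Nat.Prime.sq_add_sq (p := p) h4
  have hps : ((p : ℕ) : ZMod s) = k := (ZMod.natCast_eq_natCast_iff _ _ _).2 (hpk.of_mul_right 4)
  refine ⟨a, c, ?_⟩
  have : ((a ^ 2 + c ^ 2 : ℕ) : ZMod s) = k := by rw [hac, hps]
  push_cast at this hks
  rw [this]; linear_combination hks

lemma exists_four_sq {s : ℕ} [NeZero s] :
    ∃ k l m n : ZMod s, k ^ 2 + l ^ 2 + m ^ 2 + n ^ 2 = -1 := by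
  obtain ⟨a, b, c, d, h⟩ := Nat.sum_four_squares (s - 1)
  refine ⟨a, b, c, d, ?_⟩
  have h1 : 1 ≤ s := NeZero.one_le
  have : ((a ^ 2 + b ^ 2 + c ^ 2 + d ^ 2 + 1 : ℕ) : ZMod s) = 0 := by
    rw [h, Nat.sub_add_cancel h1]; simp
  push_cast at this
  linear_combination this

lemma isUnit_int {s : ℕ} {b : ℤ} (hb : Int.gcd b s = 1) : IsUnit (b : ZMod s) :=
  (ZMod.coe_int_isUnit_iff_isCoprime b s).2 (Int.isCoprime_iff_gcd_eq_one.2 (by rwa [Int.gcd_comm]))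

lemma gauss_odd (s : ℕ) (hs : Odd s) (η : ℂ) (hη : IsPrimitiveRoot η s) (b : ℤ)
    (hb : Int.gcd b s = 1) : GaussSum s b 0 η ^ 2 = s ∨ GaussSum s b 0 η ^ 2 = -s := by
  have : NeZero s := ⟨hs.pos.ne'⟩
  have he := AddChar.zmodChar_primitive_of_primitive_root s hη
  rw [gauss_eq s hη.pow_eq_one]
  have h1 := qsum_odd hs _ he _ (isUnit_int hb)
  obtain ⟨α, β, h⟩ := exists_two_sq hs
  have h2 := qsum_two (AddChar.zmodChar s hη.pow_eq_one) (b : ZMod s) α β h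
  apply sq_eq_sq_iff_eq_or_eq_neg.1
  rw [← h1, mul_pow, ← h2]; ring

lemma gauss_four (s : ℕ) (hs0 : 0 < s) (hs : s % 4 = 0) (η : ℂ) (hη : IsPrimitiveRoot η s) (b : ℤ)
    (hb : Int.gcd b s = 1) : (GaussSum s b 0 η ^ 2) ^ 4 = ((2 * s : ℕ) : ℂ) ^ 4 := by
  have : NeZero s := ⟨hs0.ne'⟩
  have he := AddChar.zmodChar_primitive_of_primitive_root s hη
  rw [gauss_eq s hη.pow_eq_one]
  have h1 := qsum_four hs _ he _ (isUnit_int hb)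
  obtain ⟨k, l, m, n, h⟩ := exists_four_sq (s := s)
  have h2 := qsum_quat (AddChar.zmodChar s hη.pow_eq_one) (b : ZMod s) k l m n h
  push_cast
  rw [← h1, mul_pow, ← h2]; ring

lemma unit_zpow {r : ℕ} (hr : r ≠ 0) {ξ : ℂ} (h : ξ ^ r = 1) (k : ℤ) :
    IsUnitIn (Subring.closure {ξ}) (ξ ^ k) := by
  have : NeZero r := ⟨hr⟩
  have mem : ∀ k : ℤ, ξ ^ k ∈ Subring.closure {ξ} := fun k => by
    rw [← zmodChar_int r h, AddChar.zmodChar_apply]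
    exact pow_mem (Subring.subset_closure (Set.mem_singleton ξ)) _
  refine ⟨mem k, _, mem (-k), ?_⟩
  have h0 : ξ ≠ 0 := by
    rintro rfl; rw [zero_pow hr] at h; exact zero_ne_one h
  rw [← zpow_add₀ h0]; simp

lemma unit_neg {S : Subring ℂ} {u : ℂ} (h : IsUnitIn S u) : IsUnitIn S (-u) := by
  obtain ⟨h, v, hv, e⟩ := h
  exact ⟨neg_mem h, -v, neg_mem hv, by simpa using e⟩

lemma unit_one {S : Subring ℂ} : IsUnitIn S 1 := ⟨one_mem _, 1, one_mem _, by simp⟩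

lemma half_pow (m : ℕ) (hm : 0 < m) (ξ : ℂ) (hξ : IsPrimitiveRoot ξ (2 * m)) : ξ ^ m = -1 := by
  have h : ξ ^ m * ξ ^ m = 1 := by rw [← pow_add, ← two_mul]; exact hξ.pow_eq_one
  rcases mul_self_eq_one_iff.1 h with h | h
  · have := Nat.le_of_dvd hm (hξ.dvd_of_pow_eq_one _ h)
    omega
  · exact h

lemma gauss_zero (m : ℕ) (hm : Odd m) (ξ : ℂ) (hξ : IsPrimitiveRoot ξ (2 * m)) (b : ℤ)
    (hb : Odd b) : GaussSum (2 * m) b 0 ξ = 0 := by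
  have : NeZero (2 * m) := ⟨by have := hm.pos; omega⟩
  have hx := half_pow m hm.pos ξ hξ
  rw [gauss_eq _ hξ.pow_eq_one]
  set e := AddChar.zmodChar (2 * m) hξ.pow_eq_one with he
  have h1 : e (b * (m : ZMod (2 * m)) ^ 2) = -1 := by
    have := zmodChar_int (2 * m) hξ.pow_eq_one (m * (b * m))
    rw [zpow_mul, zpow_natCast, hx, Odd.neg_one_zpow (hb.mul (by exact_mod_cast hm)), ← he] at this
    rw [← this]; congr 1; push_cast; ring
  have h2 : qsum e b = - qsum e b := by
    conv_lhs => rw [qsum, ← Equiv.sum_comp (Equiv.addRight (m : ZMod (2 * m)))]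
    rw [qsum, ← Finset.sum_neg_distrib]
    refine Finset.sum_congr rfl fun x _ => ?_
    have h0 : (2 * m : ZMod (2 * m)) = 0 := by
      have := ZMod.natCast_self (2 * m); push_cast at this; exact this
    have : b * (Equiv.addRight (m : ZMod (2 * m)) x) ^ 2 = b * x ^ 2 + b * (m : ZMod (2 * m)) ^ 2 := by
      simp only [Equiv.coe_addRight]; linear_combination b * x * h0
    rw [this, AddChar.map_add_eq_mul, h1]; ring
  linear_combination h2 / 2

lemma gauss_bb (m : ℕ) (hm : Odd m) (ξ : ℂ) (hξ : IsPrimitiveRoot ξ (2 * m)) (b : ℤ)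
    (hb : Int.gcd b m = 1) : ∃ k : ℤ, GaussSum (2 * m) b b ξ ^ 2 = ξ ^ k * (2 * (2 * m : ℕ)) ∨
      GaussSum (2 * m) b b ξ ^ 2 = - ξ ^ k * (2 * (2 * m : ℕ)) := by
  have : NeZero m := ⟨hm.pos.ne'⟩
  have h0 : ξ ≠ 0 := hξ.ne_zero (by have := hm.pos; omega)
  have hper : ∀ k : ℤ, ξ ^ ((2 * m : ℤ) * k) = 1 := fun k => by
    rw [zpow_mul]
    have : ξ ^ (2 * m : ℤ) = 1 := by exact_mod_cast hξ.pow_eq_one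
    rw [this, one_zpow]
  have hζ : IsPrimitiveRoot (ξ ^ 2) m := hξ.pow (by have := hm.pos; omega) rfl
  have hco : IsCoprime (8 : ℤ) m := by
    have : Nat.Coprime (2 ^ 3) m := (Nat.coprime_two_left.2 hm).pow_left 3
    exact_mod_cast Nat.isCoprime_iff_coprime.2 this
  obtain ⟨c, d, hcd⟩ := hco
  have hc : IsCoprime c (m : ℤ) := ⟨8, d, by linear_combination hcd⟩
  have hbc : Int.gcd (b * c) m = 1 :=
    Int.isCoprime_iff_gcd_eq_one.1 (IsCoprime.mul_left (Int.isCoprime_iff_gcd_eq_one.2 hb) hc)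
  have e1 : ∀ n : ℕ, ξ ^ (b * (n : ℤ) ^ 2 + b * n)
      = ξ ^ (-2 * b * c) * (ξ ^ 2) ^ ((b * c) * (2 * (n : ℤ) + 1) ^ 2) := by
    intro n
    obtain ⟨w, hw⟩ := Int.even_mul_succ_self (n : ℤ)
    rw [← zpow_natCast, ← zpow_mul, ← zpow_add₀ h0, ← mul_one (ξ ^ (b * (n : ℤ) ^ 2 + b * n)),
      ← hper (-d * b * w), ← zpow_add₀ h0]
    congr 1
    push_cast
    linear_combination (-b * (n ^ 2 + n)) * hcd + (b * d * m) * hw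
  have e2 : GaussSum (2 * m) b b ξ = 2 * ∑ n ∈ Finset.range m, ξ ^ (b * (n : ℤ) ^ 2 + b * n) := by
    rw [GaussSum, two_mul m, Finset.sum_range_add, two_mul]
    congr 1
    refine Finset.sum_congr rfl fun n _ => ?_
    obtain ⟨w, hw⟩ := Int.even_mul_succ_self (m : ℤ)
    obtain ⟨v, hv⟩ := hm
    rw [← mul_one (ξ ^ (b * (n : ℤ) ^ 2 + b * n)), ← hper (b * (n + v + 1)), ← zpow_add₀ h0]
    congr 1
    have hv' : (m : ℤ) = 2 * v + 1 := by exact_mod_cast hv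
    push_cast
    linear_combination (b * m) * hv'
  have e3 : ∑ n ∈ Finset.range m, (ξ ^ 2) ^ ((b * c) * (2 * (n : ℤ) + 1) ^ 2)
      = GaussSum m (b * c) 0 (ξ ^ 2) := by
    rw [gauss_eq m hζ.pow_eq_one, qsum]
    have h2 : IsUnit (2 : ZMod m) := by
      have := (ZMod.isUnit_iff_coprime 2 m).2 (Nat.coprime_two_left.2 hm)
      simpa using this
    have hbij : Function.Bijective (fun x : ZMod m => 2 * x + 1) := by
      apply Finite.injective_iff_bijective.1
      intro x y hxy
      exact h2.mul_left_cancel (add_right_cancel hxy)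
    rw [← hbij.sum_comp, ← sum_range_zmod m]
    refine Finset.sum_congr rfl fun n _ => ?_
    rw [← zmodChar_int m hζ.pow_eq_one]; congr 1; push_cast; ring
  rw [e2]
  simp only [e1]
  rw [← Finset.mul_sum, e3]
  refine ⟨-2 * b * c * 2, ?_⟩
  have hk : ξ ^ (-2 * b * c * 2) = (ξ ^ (-2 * b * c)) ^ 2 := by
    rw [zpow_mul]; norm_cast
  rw [hk]
  push_cast
  rcases gauss_odd m hm _ hζ _ hbc with h | h
  · left; rw [mul_pow, mul_pow, h]; ring
  · right; rw [mul_pow, mul_pow, h]; ring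

/-- Let `ξ` be a primitive `r`-th root of unity and `b` coprime to `r`. Then `G(b,0,ξ)²` is
associated in `ℤ[ξ]` to `r` if `r` is odd, equals `0` if `r ≡ 2 (mod 4)`, and is associated
to `2r` if `r ≡ 0 (mod 4)`; furthermore if `r ≡ 2 (mod 4)` then `G(b,b,ξ)²` is associated
to `2r`. -/
theorem stmt_13 (r : ℕ) (hr : 2 ≤ r) (ξ : ℂ) (hξ : IsPrimitiveRoot ξ r)
    (b : ℤ) (hb : Int.gcd b r = 1) :
    (Odd r → AssociatedIn (Subring.closure {ξ}) (GaussSum r b 0 ξ ^ 2) (r : ℂ)) ∧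
    (r % 4 = 2 → GaussSum r b 0 ξ ^ 2 = 0) ∧
    (r % 4 = 0 → AssociatedIn (Subring.closure {ξ}) (GaussSum r b 0 ξ ^ 2) ((2 * r : ℕ) : ℂ)) ∧
    (r % 4 = 2 → AssociatedIn (Subring.closure {ξ}) (GaussSum r b b ξ ^ 2) ((2 * r : ℕ) : ℂ)) := by
  have : NeZero r := ⟨by omega⟩
  have h1 := hξ.pow_eq_one
  have hodd2 : r % 4 = 2 → Odd b := fun h => by
    by_contra hcon
    have h2 : (2 : ℤ) ∣ b := (Int.not_odd_iff_even.1 hcon).two_dvd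
    have h3 : (2 : ℤ) ∣ (r : ℤ) := by omega
    have := Int.dvd_coe_gcd h2 h3
    rw [hb] at this
    norm_num at this
  refine ⟨fun h => ?_, fun h => ?_, fun h => ?_, fun h => ?_⟩
  · rcases gauss_odd r h ξ hξ b hb with h | h
    · exact ⟨1, unit_one, by rw [h]; ring⟩
    · exact ⟨-1, unit_neg unit_one, by rw [h]; ring⟩
  · obtain ⟨m, rfl⟩ : ∃ m, r = 2 * m := ⟨r / 2, by omega⟩
    rw [gauss_zero m (Nat.odd_iff.2 (by omega)) ξ hξ b (hodd2 h)]; simp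
  · have h4 := gauss_four r (by omega) h ξ hξ b hb
    obtain ⟨m, rfl⟩ : ∃ m, r = 4 * m := ⟨r / 4, by omega⟩
    have hI : (ξ ^ m) ^ 2 = -1 := by
      rw [← pow_mul, mul_comm m 2]
      exact half_pow (2 * m) (by omega) ξ (by rw [← mul_assoc]; exact hξ)
    have hu := unit_zpow (NeZero.ne _) h1 m
    rw [zpow_natCast] at hu
    set H := GaussSum (4 * m) b 0 ξ ^ 2
    set R := ((2 * (4 * m) : ℕ) : ℂ)
    set I := ξ ^ m
    have : (H - R) * ((H + R) * ((H - I * R) * (H + I * R))) = 0 := by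
      linear_combination h4 - R ^ 2 * (H ^ 2 - R ^ 2) * hI
    rcases mul_eq_zero.1 this with h | h
    · exact ⟨1, unit_one, by linear_combination h⟩
    rcases mul_eq_zero.1 h with h | h
    · exact ⟨-1, unit_neg unit_one, by linear_combination h⟩
    rcases mul_eq_zero.1 h with h | h
    · exact ⟨I, hu, by linear_combination h⟩
    · exact ⟨-I, unit_neg hu, by linear_combination h⟩
  · obtain ⟨m, rfl⟩ : ∃ m, r = 2 * m := ⟨r / 2, by omega⟩
    have hbm : Int.gcd b m = 1 := by
      apply Int.isCoprime_iff_gcd_eq_one.1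
      have := Int.isCoprime_iff_gcd_eq_one.2 hb
      push_cast at this
      exact this.of_mul_right_right
    obtain ⟨k, hk | hk⟩ := gauss_bb m (Nat.odd_iff.2 (by omega)) ξ hξ b hbm
    · exact ⟨_, unit_zpow (NeZero.ne _) h1 k, by rw [hk]; push_cast; ring⟩
    · exact ⟨_, unit_neg (unit_zpow (NeZero.ne _) h1 k), by rw [hk]; push_cast; ring⟩
end
end
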